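/- The n-th truncated symmetric product of the circle, TP^n(S^1), is homeomorphic to real projective n-space RP^n. -/

import Mathlib

/-!
A class in `TP^n(S^1)` is determined by the set of points other than `1` that occur an odd number
of times. Cutting the circle open at the basepoint, this is a subset of `(0, 1)` with at most `n`
elements, that is, up to a global sign, a step function `(0, 1) → {1, -1}` with at most `n` sign
changes. The homeomorphism sends `x ∈ [0, 1]^n` to the line spanned by the moments
`∫₀¹ sign(p_x(t)) t^k dt`, `0 ≤ k ≤ n`, where `p_x(t) = ∏ (t - x_i)`.

* The moment vector is nonzero, since pairing it with the coefficients of `p_x` gives `∫ |p_x|`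
  (`moment_ne_zero`). It is symmetric in `x`, a repeated coordinate drops out of the sign, and
  moving a coordinate from `0` to `1` changes only the global sign, so the map descends to the
  quotient (`torusToRP_rel`, `torusToRP_exp`). It is continuous by dominated convergence.
* Injectivity (Markov): if the moments of `sign p - c sign q` vanish, where `|c| ≤ 1`, then testing
  against `p` gives `∫ (|p| - c sign(q) p) = 0` with a nonnegative integrand, so `p` and `q` have
  the same sign up to a global one (`sign_of_moment`). Hence `p q` has only roots of even
  multiplicity in `(0, 1)`, and the two tuples have the same multiplicities modulo `2`
  (`parity_of_rpPoint_eq`); this determines the class (`exists_reduced`, `tspMk_eq_of_reduced`).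
* Surjectivity: for `v ≠ 0`, let `q` maximise the functional with coefficients `v` relative to the
  `L¹` norm among nonzero polynomials of degree at most `n`. As the derivative of the `L¹` norm at
  `q` is integration against `sign q`, the Euler-Lagrange equation says that `v` is proportional to
  the moments of `sign q` (`exists_moment`). On `(0, 1)` this sign is that of some `p_x` up to a
  constant (`exists_rpoly_sign`).

A continuous bijection from a compact space to a Hausdorff space is a homeomorphism.
-/


open scoped Topology

instance (K V : Type*) [DivisionRing K] [AddCommGroup V] [Module K V] [TopologicalSpace V] :
    TopologicalSpace (Projectivization K V) :=
  inferInstanceAs (TopologicalSpace (Quotient _))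

/-- Real projective `n`-space, as the space of lines through the origin in `ℝ^{n+1}`. -/
noncomputable abbrev RP (n : ℕ) : Type :=
  Projectivization ℝ (EuclideanSpace ℝ (Fin (n + 1)))

/-- The `n`-th truncated symmetric product `TP^n(X)`: the quotient of `X^n` by permutations and
by the relation replacing a repeated pair `x, x` by two basepoints. -/
def TruncSymProd (X : Type) [TopologicalSpace X] (x₀ : X) (n : ℕ) : Type :=
  Quot (fun f g : Fin n → X =>
    (∃ σ : Equiv.Perm (Fin n), f ∘ σ = g) ∨
      ∃ i j, i ≠ j ∧ f i = f j ∧ g i = x₀ ∧ g j = x₀ ∧ ∀ k, k ≠ i → k ≠ j → f k = g k)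

instance (X : Type) [TopologicalSpace X] (x₀ : X) (n : ℕ) :
    TopologicalSpace (TruncSymProd X x₀ n) :=
  inferInstanceAs (TopologicalSpace (Quot _))

open MeasureTheory Polynomial Set

/-! ### The real sign function -/

/-- The sign of a real number, as a real number. -/
noncomputable def rsgn (r : ℝ) : ℝ := ((SignType.sign r : SignType) : ℝ)

lemma rsgn_mul_self (r : ℝ) : rsgn r * r = |r| := by
  rw [mul_comm]; exact self_mul_sign r

lemma rsgn_mul (r s : ℝ) : rsgn (r * s) = rsgn r * rsgn s := by
  simp [rsgn, sign_mul]

lemma abs_rsgn_le (r : ℝ) : |rsgn r| ≤ 1 := by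
  unfold rsgn
  rcases lt_trichotomy r 0 with h | h | h <;> simp [h]

lemma rsgn_of_pos {r : ℝ} (h : 0 < r) : rsgn r = 1 := by simp [rsgn, h]

lemma rsgn_of_neg {r : ℝ} (h : r < 0) : rsgn r = -1 := by simp [rsgn, h]

lemma measurable_rsgn : Measurable rsgn := by
  have : rsgn = fun r : ℝ => if 0 < r then (1 : ℝ) else if r < 0 then -1 else 0 := by
    funext r
    unfold rsgn
    rcases lt_trichotomy r 0 with h | h | h
    · simp [h, h.not_gt]
    · simp [h]
    · simp [h]
  rw [this]
  exact Measurable.ite measurableSet_Ioi measurable_const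
    (Measurable.ite measurableSet_Iio measurable_const measurable_const)

lemma continuousAt_rsgn {r : ℝ} (h : r ≠ 0) : ContinuousAt rsgn r := by
  have h1 : ContinuousAt (SignType.sign : ℝ → SignType) r := continuousAt_sign_of_ne_zero h
  exact (continuous_of_discreteTopology (f := fun s : SignType => (s : ℝ))).continuousAt.comp h1

/-! ### Integration on the unit interval -/

/-- Lebesgue measure on the unit interval. -/
noncomputable abbrev muI : Measure ℝ := volume.restrict (Icc (0 : ℝ) 1)

/-- Points of the open unit interval which are not roots of `q` have full measure. -/
lemma ae_good {q : ℝ[X]} (hq : q ≠ 0) : ∀ᵐ t ∂muI, t ∈ Ioo (0 : ℝ) 1 ∧ q.eval t ≠ 0 := by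
  have h1 : ∀ᵐ t ∂muI, t ∈ Ioo (0 : ℝ) 1 := by
    rw [muI, ← restrict_Ioo_eq_restrict_Icc]
    exact ae_restrict_mem measurableSet_Ioo
  have h2 : ∀ᵐ t ∂muI, q.eval t ≠ 0 := by
    refine ae_restrict_of_ae ?_
    have hfin : {t : ℝ | q.IsRoot t}.Finite := Polynomial.finite_setOfPred_isRoot hq
    have := hfin.measure_zero volume
    rw [ae_iff]
    simpa [Polynomial.IsRoot] using this
  filter_upwards [h1, h2] with t a b using ⟨a, b⟩

lemma integrable_of_continuous {f : ℝ → ℝ} (hf : Continuous f) : Integrable f muI :=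
  hf.continuousOn.integrableOn_compact isCompact_Icc

lemma integrable_rsgn_mul (q : ℝ[X]) {f : ℝ → ℝ} (hf : Continuous f) :
    Integrable (fun t => rsgn (q.eval t) * f t) muI := by
  refine (integrable_of_continuous hf).bdd_mul (c := 1) ?_ ?_
  · exact (measurable_rsgn.comp q.continuous.measurable).aestronglyMeasurable
  · exact Filter.Eventually.of_forall fun t => abs_rsgn_le _

section Moments
variable {n : ℕ}

/-! ### Moments of signs of polynomials -/

/-- The polynomial of degree at most `n` with a given coefficient vector. -/
noncomputable def vpoly (w : EuclideanSpace ℝ (Fin (n + 1))) : ℝ[X] :=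
  ∑ k : Fin (n + 1), C (w k) * X ^ (k : ℕ)

lemma vpoly_eval (w : EuclideanSpace ℝ (Fin (n + 1))) (t : ℝ) :
    (vpoly w).eval t = ∑ k : Fin (n + 1), w k * t ^ (k : ℕ) := by
  simp [vpoly, eval_finsetSum]

lemma vpoly_coeff (w : EuclideanSpace ℝ (Fin (n + 1))) (k : Fin (n + 1)) :
    (vpoly w).coeff k = w k := by
  simp [vpoly, finsetSum_coeff, coeff_X_pow, Fin.val_inj]

lemma vpoly_ne_zero {w : EuclideanSpace ℝ (Fin (n + 1))} (h : w ≠ 0) : vpoly w ≠ 0 := by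
  intro h0
  apply h
  ext k
  rw [← vpoly_coeff, h0]
  simp

lemma vpoly_natDegree_le (w : EuclideanSpace ℝ (Fin (n + 1))) : (vpoly w).natDegree ≤ n := by
  refine natDegree_sum_le_of_forall_le _ _ fun k _ => ?_
  exact (natDegree_C_mul_X_pow_le _ _).trans (Nat.lt_succ_iff.mp k.2)

lemma exists_vpoly {q : ℝ[X]} (hq : q.natDegree ≤ n) :
    ∃ w : EuclideanSpace ℝ (Fin (n + 1)), vpoly w = q := by
  refine ⟨WithLp.toLp 2 fun k => q.coeff k, ?_⟩
  conv_rhs => rw [q.as_sum_range_C_mul_X_pow' (Nat.lt_succ_of_le hq), Finset.sum_range]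
  simp [vpoly]

lemma vpoly_add_smul (w u : EuclideanSpace ℝ (Fin (n + 1))) (s : ℝ) (t : ℝ) :
    (vpoly (w + s • u)).eval t = (vpoly w).eval t + s * (vpoly u).eval t := by
  simp only [vpoly_eval, Finset.mul_sum, ← Finset.sum_add_distrib]
  refine Finset.sum_congr rfl fun k _ => ?_
  simp
  ring

lemma continuous_vpoly_eval :
    Continuous fun z : EuclideanSpace ℝ (Fin (n + 1)) × ℝ => (vpoly z.1).eval z.2 := by
  simp only [vpoly_eval]
  fun_prop

/-- The first `n + 1` moments on the unit interval of the sign of the polynomial `q`. -/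
noncomputable def moment (n : ℕ) (q : ℝ[X]) : EuclideanSpace ℝ (Fin (n + 1)) :=
  WithLp.toLp 2 fun k => ∫ t, rsgn (q.eval t) * t ^ (k : ℕ) ∂muI

/-- Pairing the moments with a coefficient vector integrates the corresponding polynomial against
the step function `sign q`. -/
lemma inner_moment (q : ℝ[X]) (w : EuclideanSpace ℝ (Fin (n + 1))) :
    inner ℝ (moment n q) w = ∫ t, rsgn (q.eval t) * (vpoly w).eval t ∂muI := by
  have h : ∀ t, rsgn (q.eval t) * (vpoly w).eval t
      = ∑ k : Fin (n + 1), w k * (rsgn (q.eval t) * t ^ (k : ℕ)) := by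
    intro t
    rw [vpoly_eval, Finset.mul_sum]
    exact Finset.sum_congr rfl fun k _ => by ring
  simp_rw [h]
  rw [integral_finsetSum]
  · simp [PiLp.inner_apply, moment, integral_const_mul]
  · intro k _
    exact (integrable_rsgn_mul q (by fun_prop)).const_mul _

lemma integral_abs_pos {q : ℝ[X]} (hq : q ≠ 0) : 0 < ∫ t, |q.eval t| ∂muI := by
  have hint : Integrable (fun t => |q.eval t|) muI := integrable_of_continuous q.continuous.abs
  have hnn : 0 ≤ fun t : ℝ => |q.eval t| := fun t => abs_nonneg _
  refine lt_of_le_of_ne (integral_nonneg hnn) fun h => ?_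
  have h0 := (integral_eq_zero_iff_of_nonneg hnn hint).mp h.symm
  have hfalse : ∀ᵐ t ∂muI, False := by
    filter_upwards [h0, ae_good hq] with t h1 h2
    exact h2.2 (by simpa using h1)
  rw [ae_iff] at hfalse
  simp at hfalse

lemma moment_ne_zero {q : ℝ[X]} (hq : q ≠ 0) (hd : q.natDegree ≤ n) : moment n q ≠ 0 := by
  intro h
  obtain ⟨w, hw⟩ := exists_vpoly hd
  have h1 := inner_moment (n := n) q w
  rw [h, hw, inner_zero_left] at h1
  simp_rw [rsgn_mul_self] at h1
  exact (integral_abs_pos hq).ne h1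

/-- Step functions that agree up to a global sign have moments that agree up to that sign. -/
lemma moment_congr {p q : ℝ[X]} (hp : p ≠ 0) (hq : q ≠ 0) {e : ℝ} (he : e ≠ 0)
    (h : ∀ t ∈ Ioo (0 : ℝ) 1, 0 ≤ e * (p.eval t * q.eval t)) :
    rsgn e • moment n q = moment n p := by
  ext k
  simp only [moment, PiLp.smul_apply, smul_eq_mul]
  rw [← integral_const_mul]
  refine integral_congr_ae ?_
  filter_upwards [ae_good (mul_ne_zero hp hq)] with t ht
  rw [eval_mul] at ht
  have h1 := (h t ht.1).lt_of_ne' (mul_ne_zero he ht.2)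
  have h2 := rsgn_of_pos h1
  rw [rsgn_mul, rsgn_mul] at h2
  have hp2 : rsgn (p.eval t) * rsgn (p.eval t) = 1 := by
    rw [← rsgn_mul]; exact rsgn_of_pos (mul_self_pos.mpr (left_ne_zero_of_mul ht.2))
  linear_combination (t ^ (k : ℕ)) * (rsgn (p.eval t) * h2 - rsgn e * rsgn (q.eval t) * hp2)

/-- Markov's uniqueness argument, for a proportionality constant of absolute value at most one:
testing the vanishing of the moments of `sign p - c sign q` against `p` itself forces the
nonnegative function `|p| - c sign(q) p` to vanish. -/
lemma sign_of_moment_aux {p q : ℝ[X]} (hd : p.natDegree ≤ n) {c : ℝ}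
    (hc1 : |c| ≤ 1) (h : c • moment n q = moment n p) :
    ∀ t ∈ Ioo (0 : ℝ) 1, 0 ≤ c * (p.eval t * q.eval t) := by
  obtain ⟨w, hw⟩ := exists_vpoly hd
  have h1 := inner_moment (n := n) p w
  have h2 := inner_moment (n := n) q w
  rw [hw] at h1 h2
  rw [← h, inner_smul_left, h2] at h1
  simp only [conj_trivial] at h1
  rw [← integral_const_mul] at h1
  simp_rw [rsgn_mul_self] at h1
  have i1 : Integrable (fun t => |p.eval t|) muI := integrable_of_continuous p.continuous.abs
  have i2 : Integrable (fun t => c * (rsgn (q.eval t) * p.eval t)) muI :=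
    (integrable_rsgn_mul q p.continuous).const_mul c
  have hnn : 0 ≤ fun t => |p.eval t| - c * (rsgn (q.eval t) * p.eval t) := by
    intro t
    have : |c * (rsgn (q.eval t) * p.eval t)| ≤ 1 * (1 * |p.eval t|) := by
      rw [abs_mul, abs_mul]
      gcongr
      exact abs_rsgn_le _
    have := (le_abs_self _).trans this
    simp only [Pi.zero_apply]
    linarith
  have h0 := (integral_eq_zero_iff_of_nonneg hnn (i1.sub i2)).mp (by
    rw [integral_sub i1 i2, h1, sub_self])
  have h3 : ∀ᵐ t ∂muI, 0 ≤ c * (p.eval t * q.eval t) := by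
    filter_upwards [h0] with t ht
    simp only [Pi.zero_apply] at ht
    have : c * (p.eval t * q.eval t) = |p.eval t| * |q.eval t| := by
      rcases lt_trichotomy (q.eval t) 0 with hq | hq | hq
      · rw [rsgn_of_neg hq] at ht
        rw [abs_of_neg hq]
        linear_combination (q.eval t) * ht
      · simp [hq]
      · rw [rsgn_of_pos hq] at ht
        rw [abs_of_pos hq]
        linear_combination (-q.eval t) * ht
    rw [this]
    positivity
  intro t ht
  by_contra! hneg
  -- a strict violation would persist on a nonempty open set, which has positive measure
  have hU : IsOpen (Ioo (0 : ℝ) 1 ∩ {t | c * (p.eval t * q.eval t) < 0}) :=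
    isOpen_Ioo.inter (isOpen_lt (by fun_prop) continuous_const)
  have hpos := hU.measure_pos volume ⟨t, ht, hneg⟩
  rw [ae_restrict_iff' measurableSet_Icc, ae_iff] at h3
  refine hpos.ne' (measure_mono_null ?_ h3)
  rintro s ⟨hs, hs2⟩ hcon
  exact (not_le.mpr hs2) (hcon (Ioo_subset_Icc_self hs))

lemma sign_of_moment {p q : ℝ[X]} (hp : p.natDegree ≤ n) (hq : q.natDegree ≤ n) {c : ℝ}
    (hc : c ≠ 0) (h : c • moment n q = moment n p) :
    ∃ e : ℝ, e ≠ 0 ∧ ∀ t ∈ Ioo (0 : ℝ) 1, 0 ≤ e * (p.eval t * q.eval t) := by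
  rcases le_total |c| 1 with h1 | h1
  · exact ⟨c, hc, sign_of_moment_aux hp h1 h⟩
  · refine ⟨c⁻¹, inv_ne_zero hc, fun t ht => ?_⟩
    rw [mul_comm (p.eval t)]
    refine sign_of_moment_aux hq ?_ ?_ t ht
    · rw [abs_inv]; exact inv_le_one_of_one_le₀ h1
    · rw [← h, smul_smul, inv_mul_cancel₀ hc, one_smul]

/-- Every nonzero vector is, up to scale, the moment vector of the sign of a nonzero polynomial of
degree at most `n`: the polynomial maximising the corresponding linear functional relative to the
`L¹` norm, whose Euler-Lagrange equation is the claim. -/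
lemma exists_moment {v : EuclideanSpace ℝ (Fin (n + 1))} (hv : v ≠ 0) :
    ∃ q : ℝ[X], q ≠ 0 ∧ q.natDegree ≤ n ∧ ∃ c : ℝ, c • moment n q = v := by
  let N : EuclideanSpace ℝ (Fin (n + 1)) → ℝ := fun w => ∫ t, |(vpoly w).eval t| ∂muI
  have hNc : Continuous N :=
    continuous_parametric_integral_of_continuous
      (f := fun w t => |(vpoly (n := n) w).eval t|) continuous_vpoly_eval.abs isCompact_Icc
  have hNpos : ∀ w, w ≠ 0 → 0 < N w := fun w hw => integral_abs_pos (vpoly_ne_zero hw)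
  have hNsmul : ∀ (s : ℝ) w, N (s • w) = |s| * N w := by
    intro s w
    have hz : vpoly (0 : EuclideanSpace ℝ (Fin (n + 1))) = 0 := by simp [vpoly]
    simp only [N]
    rw [← integral_const_mul]
    refine integral_congr_ae (Filter.Eventually.of_forall fun t => ?_)
    have := vpoly_add_smul 0 w s t
    rw [zero_add, hz, eval_zero, zero_add] at this
    simp only [this, abs_mul]
  have hS : IsCompact (Metric.sphere (0 : EuclideanSpace ℝ (Fin (n + 1))) 1) := isCompact_sphere _ _
  have hne0 : ∀ w ∈ Metric.sphere (0 : EuclideanSpace ℝ (Fin (n + 1))) 1, w ≠ 0 := by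
    rintro w hw rfl
    simp at hw
  obtain ⟨w0, hw0, hmax⟩ := hS.exists_isMaxOn (f := fun w => inner ℝ v w / N w)
    ⟨‖v‖⁻¹ • v, by simp [norm_smul, hv]⟩
    (by
      refine ContinuousOn.div (by fun_prop) hNc.continuousOn fun w hw => (hNpos w (hne0 w hw)).ne')
  set M := inner ℝ v w0 / N w0 with hM
  have hw0ne := hne0 w0 hw0
  have key : ∀ w, inner ℝ v w ≤ M * N w := by
    intro w
    by_cases hw : w = 0
    · have : N 0 = 0 := by simpa using hNsmul 0 0
      simp [hw, this]
    have hnw : 0 < ‖w‖ := norm_pos_iff.mpr hw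
    have h1 : inner ℝ v (‖w‖⁻¹ • w) / N (‖w‖⁻¹ • w) ≤ M :=
      hmax (by simp [norm_smul, hw] : ‖w‖⁻¹ • w ∈ Metric.sphere _ _)
    rw [inner_smul_right, hNsmul, abs_of_pos (inv_pos.mpr hnw),
      mul_div_mul_left _ _ (inv_pos.mpr hnw).ne', div_le_iff₀ (hNpos w hw)] at h1
    exact h1
  have hq := vpoly_ne_zero hw0ne
  refine ⟨vpoly w0, hq, vpoly_natDegree_le _, M, ?_⟩
  refine ext_inner_right ℝ fun u => ?_
  rw [inner_smul_left, inner_moment]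
  simp only [conj_trivial]
  -- the first variation of the `L¹` norm at `w0` in the direction `u`
  have hder : HasDerivAt (fun s : ℝ => ∫ t, |(vpoly w0).eval t + s * (vpoly u).eval t| ∂muI)
      (∫ t, rsgn ((vpoly w0).eval t) * (vpoly u).eval t ∂muI) 0 := by
    refine (hasDerivAt_integral_of_dominated_loc_of_lip
      (bound := fun t => |(vpoly u).eval t|) (s := univ) Filter.univ_mem ?_ ?_ ?_ ?_ ?_ ?_).2
    · refine Filter.Eventually.of_forall fun s => ?_
      exact Continuous.aestronglyMeasurable (by fun_prop)
    · exact integrable_of_continuous (by fun_prop)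
    · exact (integrable_rsgn_mul _ (Polynomial.continuous _)).aestronglyMeasurable
    · refine Filter.Eventually.of_forall fun t => LipschitzOnWith.of_dist_le_mul fun x _ y _ => ?_
      simp only [Real.dist_eq, Real.coe_nnabs, abs_abs]
      refine (abs_abs_sub_abs_le_abs_sub _ _).trans ?_
      rw [← abs_mul]
      apply le_of_eq
      congr 1
      ring
    · exact integrable_of_continuous (by fun_prop)
    · filter_upwards [ae_good hq] with t ht
      have hi : HasDerivAt (fun s : ℝ => (vpoly w0).eval t + s * (vpoly u).eval t)
          ((vpoly u).eval t) 0 := by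
        simpa using ((hasDerivAt_id (0 : ℝ)).mul_const ((vpoly u).eval t)).const_add
          ((vpoly w0).eval t)
      have ho : HasDerivAt (fun r : ℝ => |r|) (rsgn ((vpoly w0).eval t))
          ((vpoly w0).eval t + 0 * (vpoly u).eval t) := by
        rw [zero_mul, add_zero]; exact hasDerivAt_abs ht.2
      exact ho.comp (0 : ℝ) hi
  have hlin : HasDerivAt (fun s : ℝ => inner ℝ v (w0 + s • u)) (inner ℝ v u) 0 := by
    simp only [inner_add_right, inner_smul_right]
    simpa using ((hasDerivAt_id (0 : ℝ)).mul_const (inner ℝ v u)).const_add (inner ℝ v w0)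
  have hd := (hder.const_mul M).sub hlin
  have hmin : IsLocalMin ((fun s : ℝ => M * ∫ t, |(vpoly w0).eval t + s * (vpoly u).eval t| ∂muI)
      - fun s : ℝ => inner ℝ v (w0 + s • u)) 0 := by
    refine Filter.Eventually.of_forall fun s => ?_
    have e1 : M * N w0 = inner ℝ v w0 := div_mul_cancel₀ _ (hNpos w0 hw0ne).ne'
    have e2 := key (w0 + s • u)
    simp only [N, vpoly_add_smul] at e1 e2
    simp only [Pi.sub_apply, zero_mul, add_zero, zero_smul]
    linarith
  have := hmin.hasDerivAt_eq_zero hd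
  linarith

end Moments

section CircleMap
variable {n : ℕ}

/-! ### Polynomials with prescribed roots -/

/-- The monic polynomial with prescribed roots. -/
noncomputable def rpoly (x : Fin n → ℝ) : ℝ[X] := ∏ k, (X - C (x k))

lemma rpoly_ne_zero (x : Fin n → ℝ) : rpoly x ≠ 0 :=
  Finset.prod_ne_zero_iff.mpr fun k _ => X_sub_C_ne_zero (x k)

lemma rpoly_natDegree (x : Fin n → ℝ) : (rpoly x).natDegree = n := by
  rw [rpoly, natDegree_prod_of_monic _ _ fun k _ => monic_X_sub_C (x k)]
  simp

lemma rpoly_eval (x : Fin n → ℝ) (t : ℝ) : (rpoly x).eval t = ∏ k, (t - x k) := by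
  simp [rpoly, eval_prod]

lemma rpoly_rootMultiplicity (x : Fin n → ℝ) (a : ℝ) :
    (rpoly x).rootMultiplicity a = (Finset.univ.filter fun k => x k = a).card := by
  have h : rpoly x = ((Finset.univ.val.map x).map fun b => X - C b).prod := by
    rw [Multiset.map_map]; rfl
  rw [← count_roots, h, roots_multiset_prod_X_sub_C, Multiset.count_map, Finset.card_def]
  simp [eq_comm]

lemma rpoly_rootMultiplicity_mul (x y : Fin n → ℝ) (a : ℝ) :
    (rpoly x * rpoly y).rootMultiplicity a =
      (Finset.univ.filter fun k => x k = a).card + (Finset.univ.filter fun k => y k = a).card := by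
  rw [rootMultiplicity_mul (mul_ne_zero (rpoly_ne_zero x) (rpoly_ne_zero y)),
    rpoly_rootMultiplicity, rpoly_rootMultiplicity]

/-- A polynomial of constant sign on an open interval has only roots of even multiplicity there. -/
lemma even_rootMultiplicity {r : ℝ[X]} (hr : r ≠ 0) {e : ℝ} (he : e ≠ 0)
    (h : ∀ t ∈ Ioo (0 : ℝ) 1, 0 ≤ e * r.eval t) {a : ℝ} (ha : a ∈ Ioo (0 : ℝ) 1) :
    Even (r.rootMultiplicity a) := by
  obtain ⟨s, hs, hnd⟩ := r.exists_eq_pow_rootMultiplicity_mul_and_not_dvd hr a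
  set m := r.rootMultiplicity a
  rw [dvd_iff_isRoot] at hnd
  by_contra hodd
  rw [Nat.not_even_iff_odd] at hodd
  have hev : ∀ t, r.eval t = (t - a) ^ m * s.eval t := fun t => by
    rw [hs]; simp
  have hcont : ContinuousAt (fun t => e * s.eval t) a := by fun_prop
  have hnhds : Ioo (0 : ℝ) 1 ∈ nhds a := isOpen_Ioo.mem_nhds ha
  have h1 : 0 ≤ e * s.eval a := by
    refine ge_of_tendsto (hcont.tendsto.mono_left (nhdsWithin_le_nhds (s := Ioi a))) ?_
    filter_upwards [self_mem_nhdsWithin, mem_nhdsWithin_of_mem_nhds hnhds] with t ht ht2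
    have := h t ht2
    rw [hev] at this
    have hp : 0 < (t - a) ^ m := pow_pos (sub_pos.mpr ht) m
    refine nonneg_of_mul_nonneg_right (a := (t - a) ^ m) ?_ hp
    linarith
  have h2 : e * s.eval a ≤ 0 := by
    refine le_of_tendsto (hcont.tendsto.mono_left (nhdsWithin_le_nhds (s := Iio a))) ?_
    filter_upwards [self_mem_nhdsWithin, mem_nhdsWithin_of_mem_nhds hnhds] with t ht ht2
    have := h t ht2
    rw [hev] at this
    have hp : (t - a) ^ m < 0 := hodd.pow_neg (sub_neg.mpr ht)
    by_contra! hcon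
    have := mul_neg_of_neg_of_pos hp hcon
    linarith
  exact (mul_ne_zero he hnd) (le_antisymm h2 h1)

/-- A polynomial without roots in the open unit interval has constant sign there. -/
lemma exists_const_sign {r : ℝ[X]} (h : ∀ t ∈ Ioo (0 : ℝ) 1, r.eval t ≠ 0) :
    ∃ e : ℝ, e ≠ 0 ∧ ∀ t ∈ Ioo (0 : ℝ) 1, 0 ≤ e * r.eval t := by
  have h2 : (1 / 2 : ℝ) ∈ Ioo (0 : ℝ) 1 := by norm_num
  refine ⟨r.eval (1 / 2), h _ h2, fun t ht => ?_⟩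
  by_contra! hneg
  have hpre : IsPreconnected (Ioo (0 : ℝ) 1) := isPreconnected_Ioo
  have hc : ContinuousOn (fun t => r.eval t) (Ioo (0 : ℝ) 1) := r.continuous.continuousOn
  have : ∃ z ∈ Ioo (0 : ℝ) 1, r.eval z = 0 := by
    rcases mul_neg_iff.mp hneg with ⟨a, b⟩ | ⟨a, b⟩
    · exact hpre.intermediate_value ht h2 hc ⟨b.le, a.le⟩
    · exact hpre.intermediate_value h2 ht hc ⟨a.le, b.le⟩
  obtain ⟨z, hz, hz0⟩ := this
  exact h z hz hz0

/-- On the open unit interval every polynomial of degree at most `n` has the same sign, up to a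
global sign, as one with `n` roots in `[0, 1)`: its roots in `(0, 1)`, padded by zeros. -/
lemma exists_rpoly_sign {q : ℝ[X]} (hq : q ≠ 0) (hd : q.natDegree ≤ n) :
    ∃ x : Fin n → ℝ, (∀ k, x k ∈ Ico (0 : ℝ) 1) ∧ ∃ e : ℝ, e ≠ 0 ∧
      ∀ t ∈ Ioo (0 : ℝ) 1, 0 ≤ e * (q.eval t * (rpoly x).eval t) := by
  classical
  set m := q.roots.filter (fun a => a ∈ Ioo (0 : ℝ) 1) with hm
  have hle : m ≤ q.roots := Multiset.filter_le _ _
  obtain ⟨r, hr⟩ := (Multiset.prod_X_sub_C_dvd_iff_le_roots hq m).mpr hle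
  have hcard : m.card ≤ n := (Multiset.card_le_card hle).trans ((card_roots' q).trans hd)
  have hr0 : ∀ t ∈ Ioo (0 : ℝ) 1, r.eval t ≠ 0 := by
    intro t ht h0
    have hrne : r ≠ 0 := by rintro rfl; exact hq (by rw [hr, mul_zero])
    have hroots : q.roots = m + r.roots := by
      conv_lhs => rw [hr, roots_mul (hr ▸ hq), roots_multiset_prod_X_sub_C]
    have hc := congrArg (Multiset.count t) hroots
    rw [Multiset.count_add, hm, Multiset.count_filter_of_pos ht] at hc
    have : 0 < Multiset.count t r.roots :=
      Multiset.count_pos.mpr ((mem_roots hrne).mpr h0)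
    omega
  obtain ⟨e, he, hsign⟩ := exists_const_sign hr0
  set M := m + Multiset.replicate (n - m.card) (0 : ℝ) with hM
  have hMcard : M.toList.length = n := by
    rw [Multiset.length_toList, hM, Multiset.card_add, Multiset.card_replicate]; omega
  refine ⟨fun k => M.toList.get (k.cast hMcard.symm), fun k => ?_, e, he, fun t ht => ?_⟩
  · have : M.toList.get (k.cast hMcard.symm) ∈ M :=
      Multiset.mem_toList.mp (List.get_mem _ _)
    rcases Multiset.mem_add.mp this with h | h
    · exact Ioo_subset_Ico_self (Multiset.mem_filter.mp h).2
    · have h0 := Multiset.eq_of_mem_replicate h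
      beta_reduce
      rw [h0]; norm_num
  · have h1 : ∏ k : Fin n, (t - M.toList.get (k.cast hMcard.symm)) =
        (M.map fun a => t - a).prod := by
      refine (Fintype.prod_equiv (finCongr hMcard.symm) _ (fun k => t - M.toList.get k)
        (fun k => rfl)).trans ?_
      conv_rhs => rw [← M.coe_toList]
      rw [Multiset.map_coe, Multiset.prod_coe, ← List.prod_ofFn]
      congr 1
      conv_rhs => rw [← List.ofFn_get M.toList, List.map_ofFn]
      rfl
    have h2 : q.eval t = (m.map fun a => t - a).prod * r.eval t := by
      conv_lhs => rw [hr]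
      rw [eval_mul, eval_multiset_prod, Multiset.map_map]
      simp
    rw [rpoly_eval, h1, h2, hM, Multiset.map_add, Multiset.prod_add, Multiset.map_replicate,
      Multiset.prod_replicate, sub_zero]
    have h3 := hsign t ht
    have h4 : 0 ≤ t ^ (n - m.card) := pow_nonneg ht.1.le _
    have h5 := mul_self_nonneg (m.map fun a => t - a).prod
    nlinarith [mul_nonneg (mul_nonneg h3 h4) h5]

/-! ### The map from the cube to projective space -/

lemma continuous_moment : Continuous fun x : Fin n → ℝ => moment n (rpoly x) := by
  unfold moment
  refine (PiLp.continuous_toLp 2 _).comp (continuous_pi fun k => ?_)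
  rw [continuous_iff_continuousAt]
  intro x
  refine continuousAt_of_dominated (bound := fun t => |t ^ (k : ℕ)|) ?_ ?_ ?_ ?_
  · exact Filter.Eventually.of_forall fun y =>
      (integrable_rsgn_mul (rpoly y) (by fun_prop)).aestronglyMeasurable
  · refine Filter.Eventually.of_forall fun y => Filter.Eventually.of_forall fun t => ?_
    rw [Real.norm_eq_abs, abs_mul]
    exact mul_le_of_le_one_left (abs_nonneg _) (abs_rsgn_le _)
  · exact integrable_of_continuous (by fun_prop)
  · -- `sign (p_x t)` is continuous in `x` away from the null set where `t` is a root of `p_x`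
    filter_upwards [ae_good (rpoly_ne_zero x)] with t ht
    refine ContinuousAt.mul ?_ continuousAt_const
    have h1 : ContinuousAt (fun y : Fin n → ℝ => (rpoly y).eval t) x := by
      simp only [rpoly_eval]
      exact (continuous_finsetProd _ fun k _ => by fun_prop).continuousAt
    exact ContinuousAt.comp (g := rsgn) (continuousAt_rsgn ht.2) h1

/-- The point of real projective space given by the moments of the step function changing sign at
the given points. -/
noncomputable def rpPoint (x : Fin n → ℝ) : RP n :=
  Projectivization.mk ℝ (moment n (rpoly x))
    (moment_ne_zero (rpoly_ne_zero x) (rpoly_natDegree x).le)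

lemma continuous_rpPoint : Continuous (rpPoint (n := n)) := by
  have h : Continuous fun x : Fin n → ℝ =>
      (⟨moment n (rpoly x), moment_ne_zero (rpoly_ne_zero x) (rpoly_natDegree x).le⟩ :
        {v : EuclideanSpace ℝ (Fin (n + 1)) // v ≠ 0}) := continuous_moment.subtype_mk _
  exact Continuous.comp (g := Quotient.mk (projectivizationSetoid ℝ _)) continuous_quotient_mk' h

/-- Two step functions give the same point exactly when they agree up to a global sign. -/
lemma rpPoint_eq_iff (x y : Fin n → ℝ) : rpPoint x = rpPoint y ↔
    ∃ e : ℝ, e ≠ 0 ∧ ∀ t ∈ Ioo (0 : ℝ) 1, 0 ≤ e * ((rpoly x).eval t * (rpoly y).eval t) := by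
  unfold rpPoint
  constructor
  · intro h
    obtain ⟨c, hc⟩ := (Projectivization.mk_eq_mk_iff ℝ _ _ _ _).mp h
    exact sign_of_moment (rpoly_natDegree x).le (rpoly_natDegree y).le c.ne_zero hc
  · rintro ⟨e, he, h⟩
    rw [Projectivization.mk_eq_mk_iff']
    exact ⟨rsgn e, moment_congr (rpoly_ne_zero x) (rpoly_ne_zero y) he h⟩

lemma rpPoint_surjective (P : RP n) : ∃ x : Fin n → ℝ, (∀ k, x k ∈ Ico (0 : ℝ) 1) ∧
    rpPoint x = P := by
  induction P using Projectivization.ind with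
  | h v hv =>
    obtain ⟨q, hq, hd, c, hc⟩ := exists_moment hv
    obtain ⟨x, hx, e, he, hs⟩ := exists_rpoly_sign hq hd
    refine ⟨x, hx, ?_⟩
    have h1 := moment_congr (n := n) hq (rpoly_ne_zero x) he hs
    unfold rpPoint
    rw [eq_comm, Projectivization.mk_eq_mk_iff']
    exact ⟨c * rsgn e, by rw [mul_smul, h1, hc]⟩

/-- Pointwise criterion: it suffices that each pair of factors has a product of constant sign. -/
lemma rpPoint_eq_of_factors {x y : Fin n → ℝ}
    (h : ∀ k, ∃ e : ℝ, e ≠ 0 ∧ ∀ t ∈ Ioo (0 : ℝ) 1, 0 ≤ e * ((t - x k) * (t - y k))) :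
    rpPoint x = rpPoint y := by
  choose e he hs using h
  refine (rpPoint_eq_iff x y).mpr ⟨∏ k, e k, Finset.prod_ne_zero_iff.mpr fun k _ => he k,
    fun t ht => ?_⟩
  rw [rpoly_eval, rpoly_eval, ← Finset.prod_mul_distrib, ← Finset.prod_mul_distrib]
  exact Finset.prod_nonneg fun k _ => hs k t ht

lemma rpPoint_comp_perm (x : Fin n → ℝ) (s : Equiv.Perm (Fin n)) :
    rpPoint (x ∘ s) = rpPoint x := by
  have : rpoly (x ∘ s) = rpoly x := Equiv.prod_comp s fun k => X - C (x k)
  simp only [rpPoint, this]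

/-- A repeated coordinate does not affect the sign, so it may be moved to `0`. -/
lemma rpPoint_cancel {x y : Fin n → ℝ} {i j : Fin n} (hij : i ≠ j) (hx : x i = x j)
    (hi : y i = 0) (hj : y j = 0) (h : ∀ k, k ≠ i → k ≠ j → x k = y k) :
    rpPoint x = rpPoint y := by
  refine (rpPoint_eq_iff x y).mpr ⟨1, one_ne_zero, fun t ht => ?_⟩
  rw [rpoly_eval, rpoly_eval, ← Finset.prod_mul_distrib, one_mul,
    ← Finset.mul_prod_erase _ _ (Finset.mem_univ i),
    ← Finset.mul_prod_erase _ _ (Finset.mem_erase.mpr ⟨hij.symm, Finset.mem_univ j⟩),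
    ← mul_assoc, hx, hi, hj]
  refine mul_nonneg (mul_self_nonneg _) (Finset.prod_nonneg fun k hk => ?_)
  simp only [Finset.mem_erase] at hk
  rw [h k hk.2.1 hk.1]
  exact mul_self_nonneg _

lemma parity_of_rpPoint_eq {x y : Fin n → ℝ} (h : rpPoint x = rpPoint y) {a : ℝ}
    (ha : a ∈ Ioo (0 : ℝ) 1) :
    Even ((Finset.univ.filter fun k => x k = a).card +
      (Finset.univ.filter fun k => y k = a).card) := by
  obtain ⟨e, he, hs⟩ := (rpPoint_eq_iff x y).mp h
  rw [← rpoly_rootMultiplicity_mul]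
  exact even_rootMultiplicity (mul_ne_zero (rpoly_ne_zero x) (rpoly_ne_zero y)) he
    (by simpa only [eval_mul] using hs) ha

/-! ### Passage to the torus -/

/-- The coordinate of a point of the circle in the fundamental domain `[0, 1)`. -/
noncomputable def circleCoord (z : Circle) : ℝ := Int.fract (Complex.arg z / (2 * Real.pi))

lemma circleCoord_mem (z : Circle) : circleCoord z ∈ Ico (0 : ℝ) 1 :=
  ⟨Int.fract_nonneg _, Int.fract_lt_one _⟩

lemma exp_circleCoord (z : Circle) : Circle.exp (2 * Real.pi * circleCoord z) = z := by
  conv_rhs => rw [← Circle.exp_arg z]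
  rw [Circle.exp_eq_exp]
  refine ⟨-⌊Complex.arg z / (2 * Real.pi)⌋, ?_⟩
  have := Real.pi_pos
  unfold circleCoord Int.fract
  push_cast
  field_simp
  ring

lemma circleCoord_exp (s : ℝ) : circleCoord (Circle.exp (2 * Real.pi * s)) = Int.fract s := by
  obtain ⟨m, hm⟩ := Circle.exp_eq_exp.mp (exp_circleCoord (Circle.exp (2 * Real.pi * s)))
  have hpi := Real.pi_pos
  have h : circleCoord (Circle.exp (2 * Real.pi * s)) = s + m := by
    have : 2 * Real.pi * circleCoord (Circle.exp (2 * Real.pi * s)) = 2 * Real.pi * (s + m) := by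
      rw [hm]; ring
    exact mul_left_cancel₀ (by positivity) this
  rw [← Int.fract_eq_self.mpr (circleCoord_mem (Circle.exp (2 * Real.pi * s))), h,
    Int.fract_add_intCast]

lemma circleCoord_injective : Function.Injective circleCoord := fun z w h => by
  rw [← exp_circleCoord z, h, exp_circleCoord]

lemma circleCoord_one : circleCoord 1 = 0 := by
  have := circleCoord_exp 0
  simpa using this

lemma circleCoord_mem_Ioo {z : Circle} (hz : z ≠ 1) : circleCoord z ∈ Ioo (0 : ℝ) 1 := by
  refine ⟨(circleCoord_mem z).1.lt_of_ne fun h => hz (circleCoord_injective ?_),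
    (circleCoord_mem z).2⟩
  rw [circleCoord_one, ← h]

/-- The map from the torus to real projective space inducing the homeomorphism. -/
noncomputable def torusToRP (f : Fin n → Circle) : RP n := rpPoint fun k => circleCoord (f k)

lemma torusToRP_exp {x : Fin n → ℝ} (hx : ∀ k, x k ∈ Icc (0 : ℝ) 1) :
    torusToRP (fun k => Circle.exp (2 * Real.pi * x k)) = rpPoint x := by
  refine rpPoint_eq_of_factors fun k => ?_
  simp only [circleCoord_exp]
  rcases (hx k).2.lt_or_eq with h | h
  · rw [Int.fract_eq_self.mpr ⟨(hx k).1, h⟩]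
    exact ⟨1, one_ne_zero, fun t _ => by rw [one_mul]; exact mul_self_nonneg _⟩
  · -- the endpoints `0` and `1` give factors of opposite sign, that is, a global sign change
    rw [h, Int.fract_one]
    exact ⟨-1, by norm_num, fun t ht => by nlinarith [ht.1, ht.2]⟩

lemma continuous_torusToRP : Continuous (torusToRP (n := n)) := by
  let p : (Fin n → Icc (0 : ℝ) 1) → (Fin n → Circle) := fun x k =>
    Circle.exp (2 * Real.pi * (x k : ℝ))
  have hpc : Continuous p := by
    refine continuous_pi fun k => ?_
    exact Circle.exp.continuous.comp (by fun_prop)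
  have hps : Function.Surjective p := fun f =>
    ⟨fun k => ⟨circleCoord (f k), Ico_subset_Icc_self (circleCoord_mem _)⟩,
      funext fun k => exp_circleCoord _⟩
  have hq : Topology.IsQuotientMap p := hpc.isClosedMap.isQuotientMap hpc hps
  rw [hq.continuous_iff]
  have : torusToRP ∘ p = fun x : Fin n → Icc (0 : ℝ) 1 => rpPoint fun k => (x k : ℝ) :=
    funext fun x => torusToRP_exp fun k => (x k).2
  rw [this]
  exact continuous_rpPoint.comp (by fun_prop)

/-! ### Reduced representatives -/

/-- A tuple is reduced if each value other than the basepoint `x₀` occurs at most once. -/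
def IsReducedTuple {X : Type} (x₀ : X) (f : Fin n → X) : Prop :=
  ∀ i j, i ≠ j → f i = f j → f i = x₀

/-- The class of a tuple in the truncated symmetric product. -/
def tspMk {X : Type} [TopologicalSpace X] (x₀ : X) (f : Fin n → X) : TruncSymProd X x₀ n :=
  Quot.mk _ f

/-- Cancelling repeated pairs brings every class to a reduced representative. -/
lemma exists_reduced {X : Type} [TopologicalSpace X] (x₀ : X) (f : Fin n → X) :
    ∃ g : Fin n → X, tspMk x₀ g = tspMk x₀ f ∧ IsReducedTuple x₀ g := by
  classical
  induction hN : (Finset.univ.filter fun k => f k ≠ x₀).card using Nat.strong_induction_on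
    generalizing f with
  | _ N ih =>
    by_cases hf : IsReducedTuple x₀ f
    · exact ⟨f, rfl, hf⟩
    · unfold IsReducedTuple at hf
      push Not at hf
      obtain ⟨i, j, hij, hfij, hne⟩ := hf
      let f' : Fin n → X := fun k => if k = i ∨ k = j then x₀ else f k
      have hlt : (Finset.univ.filter fun k => f' k ≠ x₀).card < N := by
        rw [← hN]
        refine Finset.card_lt_card ⟨fun k hk => ?_, fun hsub => ?_⟩
        · simp only [Finset.mem_filter, Finset.mem_univ, true_and, f'] at hk ⊢
          split_ifs at hk with h
          · exact absurd rfl hk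
          · exact hk
        · have := hsub (Finset.mem_filter.mpr ⟨Finset.mem_univ i, hne⟩)
          simp [f'] at this
      obtain ⟨g, hg, hgr⟩ := ih _ hlt f' rfl
      have hstep : tspMk x₀ f = tspMk x₀ f' := by
        refine Quot.sound (Or.inr ⟨i, j, hij, hfij, ?_, ?_, ?_⟩)
        · simp [f']
        · simp [f']
        · intro k h1 h2
          simp [f', h1, h2]
      exact ⟨g, hg.trans hstep.symm, hgr⟩

/-- Reduced tuples with matching parities of multiplicities away from the basepoint differ by a
permutation. -/
lemma tspMk_eq_of_reduced {X : Type} [DecidableEq X] [TopologicalSpace X] {x₀ : X}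
    {f g : Fin n → X} (hf : IsReducedTuple x₀ f) (hg : IsReducedTuple x₀ g)
    (h : ∀ z, z ≠ x₀ → Even ((Finset.univ.filter fun k => f k = z).card +
      (Finset.univ.filter fun k => g k = z).card)) :
    tspMk x₀ f = tspMk x₀ g := by
  have hle : ∀ {f : Fin n → X}, IsReducedTuple x₀ f → ∀ z, z ≠ x₀ →
      (Finset.univ.filter fun k => f k = z).card ≤ 1 := by
    intro f hf z hz
    refine Finset.card_le_one.mpr fun a ha b hb => ?_
    simp only [Finset.mem_filter, Finset.mem_univ, true_and] at ha hb
    by_contra hab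
    exact hz (ha ▸ hf a b hab (ha.trans hb.symm))
  have hne : ∀ z, z ≠ x₀ → (Finset.univ.filter fun k => f k = z).card =
      (Finset.univ.filter fun k => g k = z).card := by
    intro z hz
    have h1 := hle hf z hz
    have h2 := hle hg z hz
    obtain ⟨r, hr⟩ := h z hz
    omega
  have hall : ∀ z, (Finset.univ.filter fun k => f k = z).card =
      (Finset.univ.filter fun k => g k = z).card := by
    intro z
    by_cases hz : z = x₀
    · subst hz
      -- the basepoint fills up whatever the other values leave of the total `n`
      let T : Finset X := insert z (Finset.univ.image f ∪ Finset.univ.image g)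
      have hzT : z ∈ T := Finset.mem_insert_self _ _
      have e1 := Finset.card_eq_sum_card_fiberwise (f := f) (s := Finset.univ) (t := T)
        (fun k _ => by simp [T])
      have e2 := Finset.card_eq_sum_card_fiberwise (f := g) (s := Finset.univ) (t := T)
        (fun k _ => by simp [T])
      rw [← Finset.add_sum_erase _ _ hzT] at e1 e2
      have e3 : ∑ b ∈ T.erase z, (Finset.univ.filter fun k => f k = b).card =
          ∑ b ∈ T.erase z, (Finset.univ.filter fun k => g k = b).card :=
        Finset.sum_congr rfl fun b hb => hne b (Finset.ne_of_mem_erase hb)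
      omega
    · exact hne z hz
  have e : ∀ z, Nonempty ({k // g k = z} ≃ {k // f k = z}) := fun z => by
    rw [← Fintype.card_eq, Fintype.card_subtype, Fintype.card_subtype]
    exact (hall z).symm
  refine Quot.sound (Or.inl ⟨Equiv.ofFiberEquiv fun z => (e z).some, funext fun k => ?_⟩)
  exact Equiv.ofFiberEquiv_map _ k

/-! ### The induced bijection -/

lemma torusToRP_rel {f g : Fin n → Circle}
    (h : (∃ σ : Equiv.Perm (Fin n), f ∘ σ = g) ∨
      ∃ i j, i ≠ j ∧ f i = f j ∧ g i = 1 ∧ g j = 1 ∧ ∀ k, k ≠ i → k ≠ j → f k = g k) :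
    torusToRP f = torusToRP g := by
  rcases h with ⟨σ, rfl⟩ | ⟨i, j, hij, hf, hi, hj, hk⟩
  · exact (rpPoint_comp_perm (fun k => circleCoord (f k)) σ).symm
  · refine rpPoint_cancel hij (congrArg _ hf) ?_ ?_ fun k h1 h2 => congrArg _ (hk k h1 h2)
    · rw [hi, circleCoord_one]
    · rw [hj, circleCoord_one]

/-- The map from the truncated symmetric product to projective space. -/
noncomputable def tspMap : TruncSymProd Circle 1 n → RP n :=
  Quot.lift torusToRP fun _ _ h => torusToRP_rel h

lemma tspMap_mk (f : Fin n → Circle) : tspMap (tspMk 1 f) = torusToRP f := rfl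

lemma continuous_tspMap : Continuous (tspMap (n := n)) :=
  continuous_quot_lift _ continuous_torusToRP

lemma tspMap_injective : Function.Injective (tspMap (n := n)) := by
  classical
  intro a b h
  obtain ⟨f, rfl⟩ : ∃ f, tspMk 1 f = a := Quot.exists_rep a
  obtain ⟨g, rfl⟩ : ∃ g, tspMk 1 g = b := Quot.exists_rep b
  obtain ⟨f', hf, hfr⟩ := exists_reduced (1 : Circle) f
  obtain ⟨g', hg, hgr⟩ := exists_reduced (1 : Circle) g
  rw [← hf, ← hg] at h ⊢
  rw [tspMap_mk, tspMap_mk] at h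
  refine tspMk_eq_of_reduced hfr hgr fun z hz => ?_
  have := parity_of_rpPoint_eq h (circleCoord_mem_Ioo hz)
  simpa only [circleCoord_injective.eq_iff] using this

lemma tspMap_surjective : Function.Surjective (tspMap (n := n)) := by
  intro P
  obtain ⟨x, hx, rfl⟩ := rpPoint_surjective P
  exact ⟨tspMk 1 fun k => Circle.exp (2 * Real.pi * x k),
    torusToRP_exp fun k => Ico_subset_Icc_self (hx k)⟩

/-- Distinct lines are separated by the absolute cosine of the angle to one of them. -/
lemma t2Space_RP : T2Space (RP n) := by
  refine ⟨fun P Q hPQ => ?_⟩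
  induction P using Projectivization.ind with
  | h v hv =>
  induction Q using Projectivization.ind with
  | h w hw =>
    let φ : {u : EuclideanSpace ℝ (Fin (n + 1)) // u ≠ 0} → ℝ := fun u =>
      |inner ℝ w u.1 / (‖w‖ * ‖u.1‖)|
    have hφ : Continuous φ := by
      refine Continuous.abs (Continuous.div (by fun_prop) (by fun_prop) fun u => ?_)
      exact mul_ne_zero (norm_ne_zero_iff.mpr hw) (norm_ne_zero_iff.mpr u.2)
    have hlift : ∀ a b, (projectivizationSetoid ℝ (EuclideanSpace ℝ (Fin (n + 1)))) a b →
        φ a = φ b := by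
      rintro ⟨a, ha⟩ ⟨b, hb⟩ ⟨c, hc⟩
      have hc : (c : ℝ) • b = a := hc
      subst hc
      simp only [φ, inner_smul_right, norm_smul, abs_div, abs_mul, abs_norm, Real.norm_eq_abs]
      rw [mul_left_comm, mul_div_mul_left]
      exact abs_ne_zero.mpr c.ne_zero
    let ψ : RP n → ℝ := Quotient.lift φ hlift
    have hψ : Continuous ψ := hφ.quotient_lift hlift
    refine separated_by_continuous hψ fun heq => hPQ ?_
    have h1 : ψ (Projectivization.mk ℝ w hw) = 1 :=
      (abs_real_inner_div_norm_mul_norm_eq_one_iff w w).mpr ⟨hw, 1, one_ne_zero, by simp⟩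
    rw [h1] at heq
    obtain ⟨-, r, -, hr⟩ := (abs_real_inner_div_norm_mul_norm_eq_one_iff w v).mp heq
    exact (Projectivization.mk_eq_mk_iff' ℝ _ _ _ _).mpr ⟨r, hr.symm⟩

end CircleMap

/-- (Mostovoy) The truncated symmetric product `TP^n(S^1)` is homeomorphic to `ℝP^n`. -/
theorem truncSymProd_circle_homeo_rp (n : ℕ) :
    Nonempty (TruncSymProd Circle 1 n ≃ₜ RP n) := by
  have : T2Space (RP n) := t2Space_RP
  have : CompactSpace (TruncSymProd Circle 1 n) := inferInstanceAs (CompactSpace (Quot _))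
  exact ⟨Continuous.homeoOfEquivCompactToT2
    (f := Equiv.ofBijective tspMap ⟨tspMap_injective, tspMap_surjective⟩) continuous_tspMap⟩
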